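/- Let F_q be a finite field with q elements, let U ⊆ F_q^n be a linear subspace containing a nonzero vector, and let M ∈ U ⊗ U be a matrix of rank at least 2. Then q · ‖M‖₀ ≥ (q+1) · ‖U‖₀², i.e., ‖M‖₀ ≥ (1 + 1/q) · ‖U‖₀². -/

import Mathlib

/-!
Write `d = minDist U` and `q = #F`. Every nonzero column of `M` is a nonzero codeword, so it has
weight at least `d`, and it suffices to show that `q` times the number of nonzero columns is at
least `(q + 1) d`. The row space of `M` is contained in `U` and contains two independent vectors
`a`, `b`. The `q + 1` vectors `b` and `a + t b` (`t ∈ F`), one for each line of the plane spanned by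
`a` and `b`, are nonzero codewords, so their weights add up to at least `(q + 1) d`. On the other
hand, at each coordinate at most `q` of them are nonzero (`card_line_nonzero_le`), and at the index
of a zero column all of them vanish.
-/

/-- Hamming weight of a vector: the number of nonzero coordinates. -/
noncomputable def hammingWt {ι : Type*} [Fintype ι] {F : Type*} [Zero F] (x : ι → F) : ℕ :=
  Set.ncard {i | x i ≠ 0}

/-- Hamming weight of a matrix: the number of nonzero entries. -/
noncomputable def matWt {η κ : Type*} {F : Type*} [Zero F] (M : Matrix η κ F) : ℕ :=
  Set.ncard {p : η × κ | M p.1 p.2 ≠ 0}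

/-- Minimum distance of a linear code: the least Hamming weight of a nonzero codeword. -/
noncomputable def minDist {ι : Type*} [Fintype ι] {F : Type*} [Field F]
    (U : Submodule F (ι → F)) : ℕ :=
  sInf {k | ∃ x ∈ U, x ≠ 0 ∧ hammingWt x = k}

open Classical in
lemma hammingWt_eq_sum {ι F : Type*} [Fintype ι] [Zero F] (x : ι → F) :
    hammingWt x = ∑ i, if x i ≠ 0 then 1 else 0 := by
  rw [hammingWt, Set.ncard_eq_toFinset_card', Finset.sum_boole]
  simp

open Classical in
lemma matWt_eq_sum {η κ F : Type*} [Fintype η] [Fintype κ] [Zero F] (M : Matrix η κ F) :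
    matWt M = ∑ j, hammingWt (fun i => M i j) := by
  simp_rw [hammingWt_eq_sum]
  rw [matWt, Set.ncard_eq_toFinset_card', Finset.sum_comm, ← Fintype.sum_prod_type',
    Finset.sum_boole]
  simp

lemma minDist_le_hammingWt {ι F : Type*} [Fintype ι] [Field F] {U : Submodule F (ι → F)}
    {x : ι → F} (hx : x ∈ U) (h0 : x ≠ 0) : minDist U ≤ hammingWt x :=
  Nat.sInf_le ⟨x, hx, h0, rfl⟩

open Classical in
/-- Of the `q + 1` scalars `b` and `a + t b`, `t ∈ F`, at most `q` are nonzero. -/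
lemma card_line_nonzero_le {F : Type*} [Field F] [Fintype F] (a b : F) :
    (∑ t : F, if a + t * b ≠ 0 then 1 else 0) + (if b ≠ 0 then 1 else 0) ≤ Fintype.card F := by
  have hcard : Fintype.card F = ∑ _t : F, 1 := by simp
  by_cases hb : b = 0
  · rw [hcard]
    simp only [hb, ne_eq, not_true_eq_false, if_false, add_zero]
    exact Finset.sum_le_sum fun t _ => by split_ifs <;> simp
  · rw [if_pos hb, hcard]
    refine Nat.succ_le_of_lt (Finset.sum_lt_sum (fun t _ => by split_ifs <;> simp)
      ⟨-a / b, Finset.mem_univ _, ?_⟩)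
    have : a + -a / b * b = 0 := by field_simp; ring
    simp [this]

/-- A subspace of dimension at least `2` contains two independent vectors. -/
lemma exists_pair_of_two_le_finrank {F V : Type*} [Field F] [AddCommGroup V] [Module F V]
    [FiniteDimensional F V] (S : Submodule F V) (h : 2 ≤ Module.finrank F S) :
    ∃ a ∈ S, ∃ b ∈ S, b ≠ 0 ∧ a ∉ Submodule.span F {b} := by
  obtain ⟨b, hb, hb0⟩ : ∃ b ∈ S, b ≠ 0 := by
    apply Submodule.exists_mem_ne_zero_of_ne_bot
    rintro rfl
    simp at h
  by_contra! hcon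
  have hle : S ≤ Submodule.span F {b} := fun a ha => hcon a ha b hb hb0
  have := Submodule.finrank_mono hle
  rw [finrank_span_singleton hb0] at this
  omega

/-- Any element of `U ⊗ U` of rank at least `2` has Hamming weight at least
`(1 + 1/q) ⬝ (minDist U)²`, where `q` is the size of the field. -/
theorem matWt_of_rank_two_le {F : Type*} [Field F] [Fintype F] {n : ℕ}
    (U : Submodule F (Fin n → F)) (hU : ∃ u ∈ U, u ≠ 0)
    (M : Matrix (Fin n) (Fin n) F)
    (hcol : ∀ j, (fun i => M i j) ∈ U) (hrow : ∀ i, (fun j => M i j) ∈ U)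
    (hrk : 2 ≤ M.rank) :
    Fintype.card F * matWt M ≥ (Fintype.card F + 1) * (minDist U) ^ 2 := by
  classical
  rw [Matrix.rank_eq_finrank_span_row] at hrk
  set S := Submodule.span F (Set.range M.row) with hS
  have hSU : S ≤ U := by
    rw [hS, Submodule.span_le]
    rintro _ ⟨i, rfl⟩
    exact hrow i
  have hzero : ∀ x ∈ S, ∀ j, (fun i => M i j) = 0 → x j = 0 := by
    intro x hx j hj
    have : S ≤ LinearMap.ker (LinearMap.proj (R := F) (φ := fun _ : Fin n => F) j) := by
      rw [hS, Submodule.span_le]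
      rintro _ ⟨i, rfl⟩
      exact congrFun hj i
    exact this hx
  obtain ⟨a, ha, b, hb, hb0, hab⟩ := exists_pair_of_two_le_finrank S hrk
  have hmem : ∀ t : F, a + t • b ∈ S := fun t => S.add_mem ha (S.smul_mem t hb)
  have hne : ∀ t : F, a + t • b ≠ 0 := by
    intro t ht
    refine hab (Submodule.mem_span_singleton.2 ⟨-t, ?_⟩)
    rw [neg_smul, eq_comm]
    exact eq_neg_of_add_eq_zero_left ht
  have hlower : (Fintype.card F + 1) * minDist U
      ≤ (∑ t : F, hammingWt (a + t • b)) + hammingWt b := by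
    have h1 : ∑ _t : F, minDist U ≤ ∑ t : F, hammingWt (a + t • b) :=
      Finset.sum_le_sum fun t _ => minDist_le_hammingWt (hSU (hmem t)) (hne t)
    have h2 := minDist_le_hammingWt (hSU hb) hb0
    simp only [Finset.sum_const, Finset.card_univ, smul_eq_mul] at h1
    linarith
  have hswap : (∑ t : F, hammingWt (a + t • b)) + hammingWt b
      = ∑ j, ((∑ t : F, if a j + t * b j ≠ 0 then 1 else 0) + (if b j ≠ 0 then 1 else 0)) := by
    simp_rw [hammingWt_eq_sum]
    rw [Finset.sum_comm, Finset.sum_add_distrib]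
    rfl
  have hterm : ∀ j, ((∑ t : F, if a j + t * b j ≠ 0 then 1 else 0) + (if b j ≠ 0 then 1 else 0))
      * minDist U ≤ Fintype.card F * hammingWt (fun i => M i j) := by
    intro j
    by_cases hj : (fun i => M i j) = 0
    · simp [hzero a ha j hj, hzero b hb j hj]
    · exact Nat.mul_le_mul (card_line_nonzero_le _ _) (minDist_le_hammingWt (hcol j) hj)
  calc (Fintype.card F + 1) * minDist U ^ 2
      = ((Fintype.card F + 1) * minDist U) * minDist U := by ring
    _ ≤ ((∑ t : F, hammingWt (a + t • b)) + hammingWt b) * minDist U :=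
        Nat.mul_le_mul_right _ hlower
    _ ≤ Fintype.card F * matWt M := by
        rw [hswap, matWt_eq_sum, Finset.sum_mul, Finset.mul_sum]
        exact Finset.sum_le_sum fun j _ => hterm j
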